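/- arXiv:1507.06763 — 4 statements merged into one kernel-verified Lean document; each statement's English description precedes it below -/
import Mathlib

section
/- Let K_d denote the kissing number of ℝ^d. For every database size N, every threshold k ≥ 1, every radius r > 0, and all databases X, X' of size N in ℝ^d with Hamming distance H(X,X') = 1, one has |q_count(X,k,r) − q_count(X',k,r)| ≤ min(N, k·K_d + 1). (Upper bound on the global sensitivity of the outlier-count query.) -/
open Finset
open scoped Classical

noncomputable section

/-- A point of `ℝ^d`. -/
abbrev Pt (d : ℕ) := EuclideanSpace ℝ (Fin d)

/-- Hamming distance between two databases of size `N`: the number of differing records. -/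
def hamming {N d : ℕ} (X X' : Fin N → Pt d) : ℕ :=
  (univ.filter fun i => X i ≠ X' i).card

/-- The degree of record `i` in `X`: the number of other records within distance `r`. -/
def deg {N d : ℕ} (X : Fin N → Pt d) (r : ℝ) (i : Fin N) : ℕ :=
  (univ.filter fun j => j ≠ i ∧ ‖X j - X i‖ ≤ r).card

/-- The number of outlier records: records with fewer than `k` neighbors within radius `r`. -/
def qCount {N d : ℕ} (X : Fin N → Pt d) (k : ℕ) (r : ℝ) : ℕ :=
  (univ.filter fun i => deg X r i < k).card

/-- `K` is the kissing number of `ℝ^c`: the largest `n` for which there exist `n` unit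
vectors with pairwise distances at least `1`. -/
def IsKissingNumber (c K : ℕ) : Prop :=
  IsGreatest {n : ℕ | ∃ y : Fin n → Pt c,
    (∀ i, ‖y i‖ = 1) ∧ ∀ i j, i ≠ j → 1 ≤ ‖y i - y j‖} K

/-!
Join two records when they lie within distance `r`, so that outliers are the vertices of degree
less than `k`. Altering the record `i₀` only affects edges at `i₀`, so apart from `i₀` itself a new
outlier must have been adjacent to the old position `c` of `i₀`. A maximal independent set `S` of
such new outliers dominates them, and each vertex of `S` dominates at most `k` of them, itself
included. The points of `S` lie in the ball of radius `r` around `c` at pairwise distances greater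
than `r`. If one of them is `c` itself, it is the only one. Otherwise their directions from `c` form
a kissing configuration, so `#S ≤ K`. Normalizing keeps the points apart by the triangle inequality
alone: if `‖u‖ ≤ ‖v‖ ≤ ‖u - v‖` and `e`, `f` are the directions of `u`, `v`, then
`u - v = ‖u‖ • (e - f) - (‖v‖ - ‖u‖) • f` gives `‖v‖ ≤ ‖u‖ * ‖e - f‖ + (‖v‖ - ‖u‖)`.
-/

section Graph

variable {V : Type*} (G : SimpleGraph V)

lemma exists_dominating_isIndepSet_subset (A : Finset V) :
    ∃ S ⊆ A, G.IsIndepSet S ∧ ∀ a ∈ A, a ∉ S → ∃ s ∈ S, G.Adj s a := by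
  obtain ⟨S, hS⟩ := ({S ∈ A.powerset | G.IsIndepSet S} : Finset (Finset V)).exists_maximal
    ⟨∅, by simp⟩
  obtain ⟨hSA, hindep⟩ : S ⊆ A ∧ G.IsIndepSet S := by simpa using hS.prop
  refine ⟨S, hSA, hindep, fun a ha haS => ?_⟩
  by_contra! hnonadj
  have hinsert : G.IsIndepSet (insert a (S : Set V)) :=
    hindep.insert fun s hs _ => ⟨fun h => hnonadj s hs h.symm, hnonadj s hs⟩
  exact haS <| hS.le_of_ge (by simp [insert_subset ha hSA, hinsert]) (subset_insert a S)
    (mem_insert_self a S)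

variable [Fintype V] [DecidableRel G.Adj]

lemma card_le_mul_of_degree_lt_of_isIndepSet {k K : ℕ} {A : Finset V}
    (hdeg : ∀ a ∈ A, G.degree a < k) (hindep : ∀ S ⊆ A, G.IsIndepSet S → #S ≤ K) : #A ≤ k * K := by
  obtain ⟨S, hSA, hS, hdom⟩ := exists_dominating_isIndepSet_subset G A
  have hcover : A ⊆ S.biUnion fun s => insert s (G.neighborFinset s) := fun a ha => by
    by_cases haS : a ∈ S
    · exact mem_biUnion.2 ⟨a, haS, mem_insert_self _ _⟩
    · obtain ⟨s, hs, hadj⟩ := hdom a ha haS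
      exact mem_biUnion.2 ⟨s, hs, mem_insert_of_mem ((G.mem_neighborFinset s a).2 hadj)⟩
  calc #A ≤ #S * k := (card_le_card hcover).trans <| card_biUnion_le_card_mul _ _ _ fun s hs =>
        (card_insert_le _ _).trans (hdeg s (hSA hs))
    _ ≤ k * K := by rw [mul_comm]; gcongr; exact hindep S hSA hS

variable {G} {G' : SimpleGraph V} [DecidableRel G'.Adj]

lemma card_degree_lt_le_add {i₀ : V}
    (hadj : ∀ i j, i ≠ i₀ → j ≠ i₀ → G'.Adj i j → G.Adj i j) (k : ℕ) :
    #{i | G.degree i < k} ≤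
      #{i | G'.degree i < k} + (#{i | G.degree i < k ∧ G'.Adj i₀ i} + 1) := by
  have hdegree : ∀ i, i ≠ i₀ → ¬ G'.Adj i₀ i → G'.degree i ≤ G.degree i := fun i hi hi₀ =>
    card_le_card fun j hj => by
      rw [SimpleGraph.mem_neighborFinset] at hj ⊢
      refine hadj i j hi ?_ hj
      rintro rfl
      exact hi₀ hj.symm
  have hcover : (univ.filter fun i => G.degree i < k) ⊆ (univ.filter fun i => G'.degree i < k) ∪
      insert i₀ (univ.filter fun i => G.degree i < k ∧ G'.Adj i₀ i) := fun i hi => by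
    simp only [mem_union, mem_insert, mem_filter_univ] at hi ⊢
    by_contra! hnot
    exact hnot.1.not_gt ((hdegree i hnot.2.1 (hnot.2.2 hi)).trans_lt hi)
  exact (card_le_card hcover).trans <| (card_union_le _ _).trans <|
    Nat.add_le_add_left (card_insert_le _ _) _

end Graph

section Kissing

open NormedSpace (normalize)

variable {ι E : Type*} [NormedAddCommGroup E]

/-- A kissing configuration in a real normed space: a family of unit vectors at pairwise distances
at least `1`. Twice these vectors are the centres of non-overlapping unit balls touching the unit
ball at the origin. -/
def IsKissingConfiguration (y : ι → E) : Prop :=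
  (∀ i, ‖y i‖ = 1) ∧ ∀ i j, i ≠ j → 1 ≤ ‖y i - y j‖

variable (E) in
/-- `K` is an upper bound for the kissing number of the unit ball of `E`: no kissing configuration
in `E` has more than `K` vectors. -/
def IsKissingBound (K : ℕ) : Prop :=
  ∀ (n : ℕ) (y : Fin n → E), IsKissingConfiguration y → n ≤ K

lemma IsKissingNumber.isKissingBound {d K : ℕ} (hK : IsKissingNumber d K) :
    IsKissingBound (Pt d) K :=
  fun _ y hy => hK.2 ⟨y, hy⟩

lemma IsKissingBound.card_le {K : ℕ} (hK : IsKissingBound E K) [Fintype ι] {y : ι → E}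
    (hy : IsKissingConfiguration y) : Fintype.card ι ≤ K :=
  let e := (Fintype.equivFin ι).symm
  hK _ (y ∘ e) ⟨fun n => hy.1 (e n), fun m n hmn => hy.2 (e m) (e n) (e.injective.ne hmn)⟩

variable [NormedSpace ℝ E]

lemma IsKissingBound.one_le [Nontrivial E] {K : ℕ} (hK : IsKissingBound E K) : 1 ≤ K := by
  obtain ⟨x, hx⟩ := exists_norm_eq E zero_le_one
  exact hK 1 (fun _ => x) ⟨fun _ => hx, fun i j hij => absurd (Subsingleton.elim i j) hij⟩

lemma one_le_norm_normalize_sub_normalize {u v : E} (hu : u ≠ 0) (huv : ‖u‖ ≤ ‖v‖)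
    (hsub : ‖v‖ ≤ ‖u - v‖) : 1 ≤ ‖normalize u - normalize v‖ := by
  have hu' : 0 < ‖u‖ := norm_pos_iff.2 hu
  have hv : v ≠ 0 := norm_pos_iff.1 (hu'.trans_le huv)
  have hdecomp : u - v = ‖u‖ • (normalize u - normalize v) - (‖v‖ - ‖u‖) • normalize v := by
    simp only [smul_sub, sub_smul, NormedSpace.norm_smul_normalize]
    abel
  have htriangle : ‖v‖ ≤ ‖u‖ * ‖normalize u - normalize v‖ + (‖v‖ - ‖u‖) :=
    calc ‖v‖ ≤ ‖u - v‖ := hsub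
      _ ≤ ‖‖u‖ • (normalize u - normalize v)‖ + ‖(‖v‖ - ‖u‖) • normalize v‖ :=
        hdecomp ▸ norm_sub_le _ _
      _ = ‖u‖ * ‖normalize u - normalize v‖ + (‖v‖ - ‖u‖) := by
        rw [norm_smul, norm_smul, norm_norm, NormedSpace.norm_normalize hv, mul_one,
          Real.norm_of_nonneg (sub_nonneg.2 huv)]
  exact le_of_mul_le_mul_left (by linarith) hu'

lemma isKissingConfiguration_normalize {u : ι → E} (hu : ∀ i, u i ≠ 0)
    (hsub : ∀ i j, i ≠ j → ‖u i‖ ≤ ‖u i - u j‖) :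
    IsKissingConfiguration fun i => normalize (u i) := by
  refine ⟨fun i => NormedSpace.norm_normalize (hu i), fun i j hij => ?_⟩
  rcases le_total ‖u i‖ ‖u j‖ with hle | hle
  · exact one_le_norm_normalize_sub_normalize (hu i) hle
      (norm_sub_rev (u j) (u i) ▸ hsub j i hij.symm)
  · rw [norm_sub_rev]
    exact one_le_norm_normalize_sub_normalize (hu j) hle
      (norm_sub_rev (u i) (u j) ▸ hsub i j hij)

lemma IsKissingBound.card_le_of_separated_of_dist_le [Nontrivial E] {K : ℕ}
    (hK : IsKissingBound E K) {S : Finset ι} {X : ι → E} {c : E} {r : ℝ}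
    (hball : ∀ i ∈ S, dist (X i) c ≤ r)
    (hsep : (S : Set ι).Pairwise fun i j => r < dist (X i) (X j)) : #S ≤ K := by
  by_cases hc : ∃ i ∈ S, X i = c
  · obtain ⟨i, hi, rfl⟩ := hc
    have hcenter : ∀ j ∈ S, j = i := fun j hj => hsep.eq hj hi (hball j hj).not_gt
    exact (card_le_one.2 fun a ha b hb => (hcenter a ha).trans (hcenter b hb).symm).trans
      hK.one_le
  · push Not at hc
    have hkissing : IsKissingConfiguration fun i : S => normalize (X i - c) :=
      isKissingConfiguration_normalize (fun i => sub_ne_zero.2 (hc i i.2)) fun i j hij => by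
        rw [sub_sub_sub_cancel_right, ← dist_eq_norm, ← dist_eq_norm]
        exact (hball i i.2).trans (hsep i.2 j.2 (Subtype.coe_injective.ne hij)).le
    simpa using hK.card_le hkissing

end Kissing

section Sensitivity

variable {ι E : Type*}

/-- The neighbourhood graph of a database `X` at scale `r`: distinct records are adjacent when they
are at distance at most `r`. Vertices are indices, since records may coincide. -/
def neighborGraph [PseudoMetricSpace E] (X : ι → E) (r : ℝ) : SimpleGraph ι where
  Adj i j := i ≠ j ∧ dist (X i) (X j) ≤ r
  symm := ⟨fun _ _ h => ⟨h.1.symm, dist_comm (X _) (X _) ▸ h.2⟩⟩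
  loopless := ⟨fun _ h => h.1 rfl⟩

variable [Fintype ι]

/-- The outlier-count query `q_count` for a database of points in a metric space: the number of
vertices of degree less than `k` in the neighbourhood graph. -/
def outlierCount [PseudoMetricSpace E] (X : ι → E) (k : ℕ) (r : ℝ) : ℕ :=
  #{i | (neighborGraph X r).degree i < k}

lemma qCount_eq_outlierCount {d N : ℕ} (X : Fin N → Pt d) (k : ℕ) (r : ℝ) :
    qCount X k r = outlierCount X k r := by
  have hdeg : ∀ i, deg X r i = (neighborGraph X r).degree i := fun i => by
    rw [← SimpleGraph.card_neighborFinset_eq_degree, SimpleGraph.neighborFinset_eq_filter]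
    simp only [deg, neighborGraph, dist_eq_norm', ne_comm]
  simp only [qCount, outlierCount, hdeg]

lemma hamming_eq_hammingDist {d N : ℕ} (X X' : Fin N → Pt d) :
    hamming X X' = hammingDist X X' := by
  simp only [hamming, hammingDist]

lemma outlierCount_le_card [PseudoMetricSpace E] (X : ι → E) (k : ℕ) (r : ℝ) :
    outlierCount X k r ≤ Fintype.card ι :=
  card_le_univ _

variable [NormedAddCommGroup E] [NormedSpace ℝ E] [Nontrivial E] {K : ℕ}

lemma outlierCount_le_outlierCount_add (hK : IsKissingBound E K) {X X' : ι → E} {i₀ : ι}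
    (hX : ∀ i, i ≠ i₀ → X i = X' i) (k : ℕ) (r : ℝ) :
    outlierCount X k r ≤ outlierCount X' k r + (k * K + 1) := by
  have hadj : ∀ i j, i ≠ i₀ → j ≠ i₀ → (neighborGraph X' r).Adj i j →
      (neighborGraph X r).Adj i j := fun i j hi hj h => by
    simpa only [neighborGraph, hX i hi, hX j hj] using h
  have hnew : #{i | (neighborGraph X r).degree i < k ∧ (neighborGraph X' r).Adj i₀ i} ≤ k * K := by
    refine card_le_mul_of_degree_lt_of_isIndepSet (neighborGraph X r)
      (fun i hi => (mem_filter.1 hi).2.1) fun S hS hindep => ?_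
    have hball : ∀ i ∈ S, dist (X i) (X' i₀) ≤ r := fun i hi => by
      obtain ⟨hne, hdist⟩ := (mem_filter.1 (hS hi)).2.2
      rwa [hX i hne.symm, dist_comm]
    have hsep : (S : Set ι).Pairwise fun i j => r < dist (X i) (X j) := fun i hi j hj hij =>
      not_le.1 fun hle => hindep hi hj hij ⟨hij, hle⟩
    exact hK.card_le_of_separated_of_dist_le hball hsep
  exact (card_degree_lt_le_add hadj k).trans (Nat.add_le_add_left (Nat.succ_le_succ hnew) _)

theorem global_sensitivity_upper_bound_general [DecidableEq E] (hK : IsKissingBound E K)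
    {X X' : ι → E} (hH : hammingDist X X' = 1) (k : ℕ) (r : ℝ) :
    |(outlierCount X k r : ℤ) - outlierCount X' k r| ≤ min (Fintype.card ι : ℤ) (k * K + 1) := by
  obtain ⟨i₀, hi₀⟩ := card_eq_one.1 hH
  have hX : ∀ i, i ≠ i₀ → X i = X' i := fun i hi => by
    by_contra hne
    exact hi (mem_singleton.1 (hi₀ ▸ mem_filter.2 ⟨mem_univ _, hne⟩))
  have hle := outlierCount_le_outlierCount_add hK hX k r
  have hge := outlierCount_le_outlierCount_add hK (fun i hi => (hX i hi).symm) k r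
  have hcard := outlierCount_le_card X k r
  have hcard' := outlierCount_le_card X' k r
  rw [le_min_iff, abs_sub_le_iff, abs_sub_le_iff]
  omega

end Sensitivity

/-- Upper bound on the global sensitivity of the outlier-count query:
`|q_count(X,k,r) − q_count(X',k,r)| ≤ min(N, k·K_d + 1)` for neighboring databases. -/
theorem global_sensitivity_upper_bound
    (d N k K : ℕ) (hd : 1 ≤ d) (hk : 1 ≤ k) (r : ℝ) (hr : 0 < r)
    (hK : IsKissingNumber d K)
    (X X' : Fin N → Pt d) (hH : hamming X X' = 1) :
    |(qCount X k r : ℤ) - (qCount X' k r : ℤ)| ≤ min (N : ℤ) (k * K + 1) := by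
  have : Nontrivial (Pt d) :=
    Module.nontrivial_of_finrank_pos (R := ℝ) (by rwa [finrank_euclideanSpace_fin])
  rw [hamming_eq_hammingDist] at hH
  simpa only [qCount_eq_outlierCount, Fintype.card_fin] using
    global_sensitivity_upper_bound_general hK.isKissingBound hH k r
end
end

section
/- For every dimension d ≥ 1, threshold k ≥ 1, radius r > 0, and every database size N ≥ 2dk + 1, there exist databases X, X' of size N in ℝ^d with Hamming distance H(X,X') = 1 such that |q_count(X,k,r) − q_count(X',k,r)| ≥ 2dk + 1. (Lower bound on the global sensitivity of the outlier-count query.) -/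
/-!
A packing argument. Let `m` points of the closed ball of radius `r` be pairwise more than `r` apart.
Put `k` records on each of them, one isolated record far away, and the surplus records on yet
another far point. Every clustered record has exactly `k - 1` neighbors, so moving the isolated
record to the origin, within `r` of all of them, rescues all `m * k` clustered records and the moved
one. The `2 * d` vertices of the cross-polytope of radius `r` form such a packing, because distinct
vertices have non-positive inner product.
-/

open Finset
open scoped Classical

noncomputable section

section Databases

variable {N d k : ℕ} {r : ℝ} {X X' : Fin N → Pt d} {i z : Fin N} {x : Pt d}

theorem hamming_update (hx : X z ≠ x) : hamming X (Function.update X z x) = 1 := by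
  rw [hamming, card_eq_one]
  refine ⟨z, ext fun i => ?_⟩
  rcases eq_or_ne i z with rfl | hi <;> simp [*]

/-- The neighborhood of record `i`: the set of records counted by `deg X r i`, which lets degrees in
two databases be compared by inclusion. -/
def neighbors (X : Fin N → Pt d) (r : ℝ) (i : Fin N) : Finset (Fin N) :=
  {j | j ≠ i ∧ ‖X j - X i‖ ≤ r}

theorem mem_neighbors {j : Fin N} : j ∈ neighbors X r i ↔ j ≠ i ∧ ‖X j - X i‖ ≤ r := by
  simp [neighbors]

theorem card_neighbors : #(neighbors X r i) = deg X r i := rfl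

theorem card_le_deg {S : Finset (Fin N)} (hiS : i ∉ S) (hS : ∀ j ∈ S, ‖X j - X i‖ ≤ r) :
    #S ≤ deg X r i :=
  card_le_card fun j hj => mem_neighbors.mpr ⟨ne_of_mem_of_not_mem hj hiS, hS j hj⟩

theorem deg_add_one (hr : 0 ≤ r) : deg X r i + 1 = #{j | ‖X j - X i‖ ≤ r} := by
  have hi : i ∈ ({j | ‖X j - X i‖ ≤ r} : Finset (Fin N)) := by simpa using hr
  have herase : neighbors X r i = ({j | ‖X j - X i‖ ≤ r} : Finset (Fin N)).erase i := by
    ext j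
    simp [mem_neighbors]
  rw [← card_neighbors, herase, card_erase_add_one hi]

theorem deg_eq_zero (hi : ∀ j ≠ i, r < ‖X i - X j‖) : deg X r i = 0 := by
  refine card_eq_zero.mpr (eq_empty_of_forall_notMem fun j hj => ?_)
  obtain ⟨hji, hle⟩ := mem_neighbors.mp hj
  exact (hi j hji).not_ge (norm_sub_rev (X i) (X j) ▸ hle)

theorem neighbors_subset_neighbors_update (hi : i ≠ z) (hz : r < ‖X z - X i‖) :
    neighbors X r i ⊆ neighbors (Function.update X z x) r i := by
  intro j hj
  obtain ⟨hji, hle⟩ := mem_neighbors.mp hj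
  have hjz : j ≠ z := by
    rintro rfl
    exact hz.not_ge hle
  simpa [mem_neighbors, hi, hjz, hji] using hle

theorem deg_le_deg_update (hi : i ≠ z) (hz : r < ‖X z - X i‖) :
    deg X r i ≤ deg (Function.update X z x) r i :=
  card_le_card (neighbors_subset_neighbors_update hi hz)

theorem deg_lt_deg_update (hi : i ≠ z) (hz : r < ‖X z - X i‖) (hx : ‖x - X i‖ ≤ r) :
    deg X r i < deg (Function.update X z x) r i := by
  refine card_lt_card ((ssubset_iff_of_subset (neighbors_subset_neighbors_update hi hz)).mpr
    ⟨z, ?_, fun hmem => hz.not_ge (mem_neighbors.mp hmem).2⟩)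
  simpa [mem_neighbors, hi, hi.symm] using hx

theorem qCount_add_card_le {T : Finset (Fin N)} (hT : ∀ i ∈ T, deg X r i < k ∧ k ≤ deg X' r i)
    (hTc : ∀ i ∉ T, deg X r i ≤ deg X' r i) : qCount X' k r + #T ≤ qCount X k r := by
  have hdisj : Disjoint ({i | deg X' r i < k} : Finset (Fin N)) T :=
    disjoint_left.mpr fun i hi hiT => (hT i hiT).2.not_gt ((mem_filter_univ i).mp hi)
  rw [qCount, ← card_union_of_disjoint hdisj]
  refine card_le_card fun i hi => (mem_filter_univ i).mpr ?_
  by_cases hiT : i ∈ T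
  · exact (hT i hiT).1
  · have hi' : deg X' r i < k := by simpa [hiT] using hi
    exact (hTc i hiT).trans_lt hi'

theorem qCount_update_add_le {S : Finset (Fin N)} (hz : ∀ j ≠ z, r < ‖X z - X j‖) (hzS : z ∉ S)
    (hS : ∀ i ∈ S, ‖x - X i‖ ≤ r ∧ deg X r i + 1 = k) (hk : 0 < k) (hkS : k ≤ #S) :
    qCount (Function.update X z x) k r + (#S + 1) ≤ qCount X k r := by
  have hSz : ∀ i ∈ S, i ≠ z := fun i hi => ne_of_mem_of_not_mem hi hzS
  rw [← card_insert_of_notMem hzS]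
  refine qCount_add_card_le ((forall_mem_insert ..).mpr ⟨⟨?_, ?_⟩, fun i hi => ⟨?_, ?_⟩⟩)
    fun i hi => ?_
  · rwa [deg_eq_zero hz]
  · refine hkS.trans (card_le_deg hzS fun j hj => ?_)
    simpa [hSz j hj, norm_sub_rev] using (hS j hj).1
  · exact Nat.lt_of_succ_le (hS i hi).2.le
  · exact (hS i hi).2.symm.le.trans (deg_lt_deg_update (hSz i hi) (hz i (hSz i hi)) (hS i hi).1)
  · have hiz : i ≠ z := fun h => hi (h ▸ mem_insert_self z S)
    exact deg_le_deg_update hiz (hz i hiz)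

end Databases

section Clusters

variable {ι : Type*} {N d k : ℕ} {r : ℝ} {v : ι → Pt d} {p q : Pt d}
  {e : Option (ι × Fin k) ↪ Fin N}

/-- The database with `k` records at each center `v a`, one record at `q`, and all surplus records
at `p`. The index `e none` is that of the record at `q`, and the indices `e (some (a, c))` are those
of the records at `v a`. -/
def clusterDatabase (e : Option (ι × Fin k) ↪ Fin N) (v : ι → Pt d) (p q : Pt d) : Fin N → Pt d :=
  Function.extend e (fun o => o.elim q fun s => v s.1) fun _ => p

theorem clusterDatabase_some (s : ι × Fin k) : clusterDatabase e v p q (e (some s)) = v s.1 :=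
  e.injective.extend_apply ..

theorem clusterDatabase_none : clusterDatabase e v p q (e none) = q :=
  e.injective.extend_apply ..

theorem clusterDatabase_of_notMem_range {j : Fin N} (hj : j ∉ Set.range e) :
    clusterDatabase e v p q j = p :=
  Function.extend_apply' _ _ _ hj

theorem lt_norm_sub_clusterDatabase (hqv : ∀ a, r < ‖q - v a‖) (hqp : r < ‖q - p‖) {j : Fin N}
    (hj : j ≠ e none) : r < ‖q - clusterDatabase e v p q j‖ := by
  by_cases hrange : j ∈ Set.range e
  · obtain ⟨_ | s, rfl⟩ := hrange
    · exact absurd rfl hj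
    · rw [clusterDatabase_some]
      exact hqv s.1
  · rwa [clusterDatabase_of_notMem_range hrange]

theorem norm_clusterDatabase_sub_le_iff (hr : 0 ≤ r)
    (hsep : Pairwise fun a b => r < ‖v a - v b‖) (hp : ∀ a, r < ‖p - v a‖)
    (hq : ∀ a, r < ‖q - v a‖) {a : ι} {j : Fin N} :
    ‖clusterDatabase e v p q j - v a‖ ≤ r ↔ ∃ c, e (some (a, c)) = j := by
  constructor
  · intro hle
    by_cases hrange : j ∈ Set.range e
    · obtain ⟨_ | ⟨b, c⟩, rfl⟩ := hrange
      · rw [clusterDatabase_none] at hle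
        exact absurd hle (hq a).not_ge
      · rw [clusterDatabase_some] at hle
        obtain rfl : b = a := hsep.eq hle.not_gt
        exact ⟨c, rfl⟩
    · rw [clusterDatabase_of_notMem_range hrange] at hle
      exact absurd hle (hp a).not_ge
  · rintro ⟨c, rfl⟩
    simpa [clusterDatabase_some] using hr

theorem deg_clusterDatabase_add_one (hr : 0 ≤ r)
    (hsep : Pairwise fun a b => r < ‖v a - v b‖) (hp : ∀ a, r < ‖p - v a‖)
    (hq : ∀ a, r < ‖q - v a‖) (s : ι × Fin k) :
    deg (clusterDatabase e v p q) r (e (some s)) + 1 = k := by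
  have hcluster : Function.Injective fun c => e (some (s.1, c)) :=
    e.injective.comp ((Option.some_injective _).comp (Prod.mk_right_injective s.1))
  calc
    _ = #{j | ‖clusterDatabase e v p q j - v s.1‖ ≤ r} := by
      rw [deg_add_one hr, clusterDatabase_some]
    _ = #(univ.image fun c => e (some (s.1, c))) := by
      congr 1
      ext j
      simp [norm_clusterDatabase_sub_le_iff hr hsep hp hq]
    _ = k := by rw [card_image_of_injective _ hcluster, card_fin]

theorem qCount_update_clusterDatabase_add_le [Fintype ι] [Nonempty ι] {x : Pt d} (hk : 0 < k)
    (hx : ∀ a, ‖x - v a‖ ≤ r) (hsep : Pairwise fun a b => r < ‖v a - v b‖)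
    (hp : ∀ a, r < ‖p - v a‖) (hq : ∀ a, r < ‖q - v a‖) (hqp : r < ‖q - p‖) :
    qCount (Function.update (clusterDatabase e v p q) (e none) x) k r + (Fintype.card ι * k + 1) ≤
      qCount (clusterDatabase e v p q) k r := by
  have hr : 0 ≤ r := (norm_nonneg _).trans (hx (Classical.arbitrary ι))
  let clustered : Finset (Fin N) := univ.map (Function.Embedding.some.trans e)
  have hcard : #clustered = Fintype.card ι * k := by simp [clustered]
  have hisolated : ∀ j ≠ e none,
      r < ‖clusterDatabase e v p q (e none) - clusterDatabase e v p q j‖ := fun j hj => by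
    rw [clusterDatabase_none]
    exact lt_norm_sub_clusterDatabase hq hqp hj
  rw [← hcard]
  refine qCount_update_add_le hisolated (by simp [clustered]) (fun i hi => ?_) hk ?_
  · obtain ⟨s, -, rfl⟩ := mem_map.mp hi
    refine ⟨?_, deg_clusterDatabase_add_one hr hsep hp hq s⟩
    simpa [clusterDatabase_some] using hx s.1
  · rw [hcard]
    exact Nat.le_mul_of_pos_left k Fintype.card_pos

theorem exists_qCount_add_le_of_separated [Fintype ι] [Nonempty ι] (hd : 0 < d) (hk : 0 < k)
    (hv : ∀ a, ‖v a‖ ≤ r) (hsep : Pairwise fun a b => r < ‖v a - v b‖)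
    (hN : Fintype.card ι * k + 1 ≤ N) :
    ∃ X X' : Fin N → Pt d, hamming X X' = 1 ∧
      qCount X' k r + (Fintype.card ι * k + 1) ≤ qCount X k r := by
  have : NeZero d := ⟨hd.ne'⟩
  have hr : 0 ≤ r := (norm_nonneg _).trans (hv (Classical.arbitrary ι))
  obtain ⟨p, hp⟩ := NormedSpace.exists_lt_norm ℝ (Pt d) (r + r)
  obtain ⟨q, hq⟩ := NormedSpace.exists_lt_norm ℝ (Pt d) (r + ‖p‖)
  have hpv : ∀ a, r < ‖p - v a‖ := fun a => by linarith [hv a, norm_sub_norm_le p (v a)]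
  have hqv : ∀ a, r < ‖q - v a‖ := fun a => by linarith [hv a, norm_sub_norm_le q (v a)]
  have hqp : r < ‖q - p‖ := by linarith [norm_sub_norm_le q p]
  have hq0 : q ≠ 0 := norm_pos_iff.mp (by linarith [norm_nonneg p])
  obtain ⟨e⟩ : Nonempty (Option (ι × Fin k) ↪ Fin N) :=
    Function.Embedding.nonempty_of_card_le (by simpa using hN)
  exact ⟨clusterDatabase e v p q, Function.update _ (e none) 0,
    hamming_update (by rwa [clusterDatabase_none]),
    qCount_update_clusterDatabase_add_le hk (by simpa using hv) hsep hpv hqv hqp⟩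

end Clusters

theorem norm_lt_norm_sub_of_inner_nonpos {E : Type*} [NormedAddCommGroup E] [InnerProductSpace ℝ E]
    {x y : E} (hy : y ≠ 0) (hxy : inner ℝ x y ≤ 0) : ‖x‖ < ‖x - y‖ := by
  refine lt_of_pow_lt_pow_left₀ 2 (norm_nonneg _) ?_
  rw [norm_sub_sq_real]
  linarith [pow_pos (norm_pos_iff.mpr hy) 2]

section CrossPolytope

variable {d : ℕ} {r : ℝ}

/-- The vertices `± r eₐ` of the cross-polytope of radius `r` in `ℝ^d`, indexed by the axis `a` and
the sign. They serve as the cluster centers of the extremal database. -/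
def crossVertex (r : ℝ) (s : Fin d × ℤˣ) : Pt d :=
  EuclideanSpace.single s.1 ((s.2 : ℤ) * r)

theorem norm_crossVertex (hr : 0 ≤ r) (s : Fin d × ℤˣ) : ‖crossVertex r s‖ = r := by
  have hsign : |((s.2 : ℤ) : ℝ)| = 1 := by
    rw [← Int.cast_abs, Int.isUnit_iff_abs_eq.mp s.2.isUnit, Int.cast_one]
  rw [crossVertex, PiLp.norm_single, Real.norm_eq_abs, abs_mul, hsign, one_mul, abs_of_nonneg hr]

theorem inner_crossVertex_nonpos {s t : Fin d × ℤˣ} (hst : s ≠ t) :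
    inner ℝ (crossVertex r s) (crossVertex r t) ≤ 0 := by
  obtain ⟨a, u⟩ := s
  obtain ⟨b, w⟩ := t
  rcases eq_or_ne a b with rfl | hab
  · obtain rfl : u = -w := Int.units_ne_iff_eq_neg.mp fun h => hst (h ▸ rfl)
    simpa [crossVertex, EuclideanSpace.inner_single_left] using mul_self_nonneg ((w : ℤ) * r)
  · simp [crossVertex, EuclideanSpace.inner_single_left, hab]

theorem pairwise_lt_norm_crossVertex_sub (hr : 0 < r) :
    Pairwise fun s t : Fin d × ℤˣ => r < ‖crossVertex r s - crossVertex r t‖ := by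
  intro s t hst
  have ht : crossVertex r t ≠ 0 := by rwa [← norm_pos_iff, norm_crossVertex hr.le]
  simpa only [norm_crossVertex hr.le] using
    norm_lt_norm_sub_of_inner_nonpos ht (inner_crossVertex_nonpos hst)

end CrossPolytope

/-- Lower bound on the global sensitivity of the outlier-count query: there exist
neighboring databases whose outlier counts differ by at least `2dk + 1`. -/
theorem global_sensitivity_lower_bound
    (d N k : ℕ) (hd : 1 ≤ d) (hk : 1 ≤ k) (r : ℝ) (hr : 0 < r)
    (hN : 2 * d * k + 1 ≤ N) :
    ∃ X X' : Fin N → Pt d, hamming X X' = 1 ∧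
      (2 * d * k + 1 : ℤ) ≤ |(qCount X k r : ℤ) - (qCount X' k r : ℤ)| := by
  have : Nonempty (Fin d × ℤˣ) := ⟨⟨0, hd⟩, 1⟩
  have hcard : Fintype.card (Fin d × ℤˣ) = 2 * d := by simp [mul_comm]
  obtain ⟨X, X', hXX', hcount⟩ := exists_qCount_add_le_of_separated (N := N) hd hk
    (fun s => (norm_crossVertex hr.le s).le) (pairwise_lt_norm_crossVertex_sub hr) (by rwa [hcard])
  rw [hcard] at hcount
  refine ⟨X, X', hXX', le_trans ?_ (le_abs_self _)⟩
  rw [le_sub_iff_add_le']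
  exact_mod_cast hcount
end
end

section
/- Let X and X₁ be databases of size N in ℝ^d with Hamming distance H(X,X₁) = 1, and let i₀ be the unique index with X i₀ ≠ X₁ i₀. Then for every m ≥ 0, V(X₁,m,r) ⊆ V(X,m−1,r) ∪ V(X,m,r) ∪ V(X,m+1,r) ∪ {i₀} (where V(X,m−1,r) is empty for m = 0). -/
open Finset
open scoped Classical

noncomputable section

/-- `V(X,m,r)`: the set of record indices of degree exactly `m` (empty for `m < 0`). -/
def Vset {N d : ℕ} (X : Fin N → Pt d) (r : ℝ) (m : ℤ) : Finset (Fin N) :=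
  univ.filter fun i => (deg X r i : ℤ) = m

/-- `CV(X,x,m,r)`: the set of degree-`m` record indices within distance `r` of `x`
(empty for `m < 0`). -/
def CV {N d : ℕ} (X : Fin N → Pt d) (x : Pt d) (m : ℤ) (r : ℝ) : Finset (Fin N) :=
  (Vset X r m).filter fun i => ‖X i - x‖ ≤ r

/-!
A record that is the same in both databases sees its neighbourhood change only through the records
that differ, so its degree changes by at most their number, the Hamming distance. At distance one
the degree moves by at most one, and the only record escaping this bound is `i₀`.
-/

section Perturbation

variable {N d : ℕ} {X Y : Fin N → Pt d}

theorem hamming_comm (X Y : Fin N → Pt d) : hamming X Y = hamming Y X := by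
  simp only [hamming, ne_comm]

theorem filter_ne_eq_singleton_of_hamming_eq_one (hH : hamming X Y = 1) {i₀ : Fin N}
    (hi₀ : X i₀ ≠ Y i₀) : (univ.filter fun i => X i ≠ Y i) = {i₀} :=
  (eq_of_subset_of_card_le (singleton_subset_iff.2 (by simpa using hi₀)) hH.le).symm

theorem deg_le_deg_add_hamming {i : Fin N} (hi : X i = Y i) (r : ℝ) :
    deg X r i ≤ deg Y r i + hamming X Y := by
  have hsub : (univ.filter fun j => j ≠ i ∧ ‖X j - X i‖ ≤ r) ⊆
      (univ.filter fun j => j ≠ i ∧ ‖Y j - Y i‖ ≤ r) ∪ univ.filter fun j => X j ≠ Y j := by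
    intro j hj
    by_cases hXY : X j = Y j
    · exact mem_union_left _ (by simpa [hXY, hi] using hj)
    · exact mem_union_right _ (by simpa using hXY)
  exact (card_le_card hsub).trans (card_union_le _ _)

theorem Vset_neighbor_subset_general (X Y : Fin N → Pt d) (r : ℝ) (m : ℤ) :
    Vset Y r m ⊆
      (Icc (m - hamming X Y) (m + hamming X Y)).biUnion (Vset X r) ∪
        univ.filter fun i => X i ≠ Y i := by
  intro i hi
  by_cases hXY : X i = Y i
  · have hdeg : (deg Y r i : ℤ) = m := (mem_filter.1 hi).2
    have hle : deg X r i ≤ deg Y r i + hamming X Y := deg_le_deg_add_hamming hXY r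
    have hge : deg Y r i ≤ deg X r i + hamming X Y :=
      hamming_comm X Y ▸ deg_le_deg_add_hamming hXY.symm r
    have hmem : (deg X r i : ℤ) ∈ Icc (m - hamming X Y) (m + hamming X Y) :=
      mem_Icc.2 ⟨by omega, by omega⟩
    exact mem_union_left _ (mem_biUnion.2 ⟨_, hmem, by simp [Vset]⟩)
  · exact mem_union_right _ (by simpa using hXY)

end Perturbation

/-- If `X₁` differs from `X` in exactly the record `i₀`, then every record of degree `m`
in `X₁` either has degree `m−1`, `m`, or `m+1` in `X`, or is `i₀` itself. -/
theorem Vset_neighbor_subset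
    (d N : ℕ) (hd : 1 ≤ d) (r : ℝ) (hr : 0 < r)
    (X X₁ : Fin N → Pt d) (hH : hamming X X₁ = 1)
    (i₀ : Fin N) (hi₀ : X i₀ ≠ X₁ i₀) (m : ℕ) :
    Vset X₁ r (m : ℤ) ⊆
      Vset X r ((m : ℤ) - 1) ∪ Vset X r (m : ℤ) ∪ Vset X r ((m : ℤ) + 1) ∪ {i₀} := by
  have hIcc : Icc ((m : ℤ) - 1) (m + 1) = {(m : ℤ) - 1, (m : ℤ), (m : ℤ) + 1} := by grind
  simpa only [filter_ne_eq_singleton_of_hamming_eq_one hH hi₀, hH, Nat.cast_one, hIcc,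
    biUnion_insert, singleton_biUnion, union_assoc] using Vset_neighbor_subset_general X X₁ r m
end
end

section
/- Let 1 ≤ c ≤ d, let F_c be the (finite, nonempty) family of c-element subsets of {1,…,d}, let ε > 0, and define the utility u(X,S) = q_count(X,k,r,S) / min(N, k·K_c + 1) and the exponential-mechanism distribution p_X(S) = exp(ε·u(X,S)) / ∑_{S'∈F_c} exp(ε·u(X,S')) on F_c. Then for all databases X, X' of size N in ℝ^d with H(X,X') = 1 and every S ∈ F_c, p_X(S) ≤ e^{2ε}·p_{X'}(S). (The exponential mechanism with utility u_subspace guarantees 2ε-differential privacy.) -/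
open Finset
open scoped Classical

noncomputable section

/-- The subspace distance `dist_S(x,y) = sqrt( (∑_{i∈S} (x_i − y_i)²) / |S| )`. -/
def sdist {d : ℕ} (S : Finset (Fin d)) (x y : Pt d) : ℝ :=
  Real.sqrt ((∑ i ∈ S, (x i - y i) ^ 2) / S.card)

/-- The degree of record `i` in `X` in subspace `S`: the number of other records within
subspace distance `r`. -/
def sdeg {N d : ℕ} (S : Finset (Fin d)) (X : Fin N → Pt d) (r : ℝ) (i : Fin N) : ℕ :=
  (univ.filter fun j => j ≠ i ∧ sdist S (X j) (X i) ≤ r).card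

/-- `q_count(X,k,r,S)`: the number of outlier records in subspace `S`. -/
def qCountS {N d : ℕ} (X : Fin N → Pt d) (k : ℕ) (r : ℝ) (S : Finset (Fin d)) : ℕ :=
  (univ.filter fun i => sdeg S X r i < k).card

/-- The utility function `u(X,S) = q_count(X,k,r,S) / min(N, k·K_c + 1)` for the
exponential mechanism, where `K_c` is the kissing number of `ℝ^{|S|}`. -/
def uSubspace {N d : ℕ} (k : ℕ) (r : ℝ) (Kc : ℕ) (X : Fin N → Pt d)
    (S : Finset (Fin d)) : ℝ :=
  (qCountS X k r S : ℝ) / ((min N (k * Kc + 1) : ℕ) : ℝ)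

/-!
Changing record `t` can turn another record `i` into an outlier only if `i` was adjacent to the
record that has been removed. So the new outliers lie in a ball of radius `r` around that record,
and each of them has fewer than `k` neighbours. A maximal `r`-separated subset of them is a cover,
so it contains at least a `1 / k` fraction of them; seen from the centre of the ball, any two of its
points make an angle of at least `60°`, so it has at most `K_c` elements. Hence `q_count` changes by
at most `k * K_c + 1`, and also by at most `N`: the utility has sensitivity `1`. The factor `e^ε` is
then paid twice, once for the weight of `S` and once for the normalizing sum.
-/

/-- The probability with which the exponential mechanism with utility `u`, parameter `ε` and finite
range `F` outputs `a`, for `a ∈ F`. -/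
def expMechanism {α : Type*} (F : Finset α) (ε : ℝ) (u : α → ℝ) (a : α) : ℝ :=
  Real.exp (ε * u a) / ∑ b ∈ F, Real.exp (ε * u b)

lemma expMechanism_le_exp_mul {α : Type*} {F : Finset α} {u u' : α → ℝ} {ε Δ : ℝ} (hε : 0 ≤ ε)
    (hu : ∀ b ∈ F, |u b - u' b| ≤ Δ) {a : α} (ha : a ∈ F) :
    expMechanism F ε u a ≤ Real.exp (2 * (ε * Δ)) * expMechanism F ε u' a := by
  have hnum : Real.exp (ε * u a) ≤ Real.exp (ε * Δ) * Real.exp (ε * u' a) := by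
    rw [← Real.exp_add, ← mul_add]
    gcongr
    linarith [(abs_le.1 (hu a ha)).2]
  have hden : Real.exp (-(ε * Δ)) * ∑ b ∈ F, Real.exp (ε * u' b) ≤
      ∑ b ∈ F, Real.exp (ε * u b) := by
    rw [mul_sum]
    refine sum_le_sum fun b hb ↦ ?_
    rw [← mul_neg, ← Real.exp_add, ← mul_add]
    gcongr
    linarith [(abs_le.1 (hu b hb)).1]
  have hpos : 0 < ∑ b ∈ F, Real.exp (ε * u' b) := sum_pos (fun _ _ ↦ Real.exp_pos _) ⟨a, ha⟩
  calc expMechanism F ε u a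
      ≤ Real.exp (ε * Δ) * Real.exp (ε * u' a) /
          (Real.exp (-(ε * Δ)) * ∑ b ∈ F, Real.exp (ε * u' b)) := by
        unfold expMechanism
        gcongr
    _ = Real.exp (2 * (ε * Δ)) * expMechanism F ε u' a := by
        rw [mul_div_mul_comm, ← Real.exp_sub, sub_neg_eq_add, ← two_mul, expMechanism]

-- In a triangle, the angle opposite a longest side is at least 60°.
lemma one_le_norm_normalize_sub_normalize_s14 {E : Type*} [NormedAddCommGroup E]
    [InnerProductSpace ℝ E] {x y : E} (hx : x ≠ 0) (hy : y ≠ 0) (hxy : ‖x‖ ≤ ‖x - y‖)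
    (hyx : ‖y‖ ≤ ‖x - y‖) :
    1 ≤ ‖NormedSpace.normalize x - NormedSpace.normalize y‖ := by
  have hinner : 2 * inner ℝ x y ≤ ‖x‖ * ‖y‖ := by
    have hcos := norm_sub_sq_real x y
    have hleft : 2 * inner ℝ x y ≤ ‖x‖ * ‖x‖ := by
      linarith [pow_le_pow_left₀ (norm_nonneg y) hyx 2]
    have hright : 2 * inner ℝ x y ≤ ‖y‖ * ‖y‖ := by
      linarith [pow_le_pow_left₀ (norm_nonneg x) hxy 2]
    rcases le_total ‖x‖ ‖y‖ with h | h
    · exact hleft.trans (by gcongr)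
    · exact hright.trans (by gcongr)
  have hinner' : 2 * inner ℝ (NormedSpace.normalize x) (NormedSpace.normalize y) ≤ 1 := by
    have hpos : 0 < ‖x‖ * ‖y‖ := by positivity
    calc 2 * inner ℝ (NormedSpace.normalize x) (NormedSpace.normalize y)
        = 2 * inner ℝ x y / (‖x‖ * ‖y‖) := by
          simp only [NormedSpace.normalize, inner_smul_left, inner_smul_right, conj_trivial]
          field_simp
      _ ≤ 1 := (div_le_one hpos).2 hinner
  rw [← one_le_sq_iff₀ (norm_nonneg _), norm_sub_sq_real,
    NormedSpace.norm_normalize_eq_one_iff.2 hx, NormedSpace.norm_normalize_eq_one_iff.2 hy]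
  linarith

lemma exists_isSeparated_card_le_mul {ι : Type*} (R : SetRel ι ι) [R.IsRefl] [R.IsSymm]
    (A : Finset ι) {k : ℕ} (hA : ∀ i ∈ A, #{j ∈ A | (j, i) ∈ R} ≤ k) :
    ∃ I ⊆ A, R.IsSeparated (I : Set ι) ∧ #A ≤ k * #I := by
  have hfin : {N : Set ι | N ⊆ A ∧ R.IsSeparated N}.Finite :=
    A.finite_toSet.finite_subsets.subset fun _ hN ↦ hN.1
  obtain ⟨N, hN⟩ := hfin.exists_maximal ⟨∅, Set.empty_subset _, .empty⟩
  lift N to Finset ι using A.finite_toSet.subset hN.prop.1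
  have hcover : A ⊆ N.biUnion fun i ↦ {j ∈ A | (j, i) ∈ R} := fun j hj ↦ by
    obtain ⟨i, hi, hji⟩ := SetRel.IsCover.of_maximal_isSeparated hN hj
    exact mem_biUnion.2 ⟨i, hi, mem_filter.2 ⟨hj, hji⟩⟩
  refine ⟨N, mod_cast hN.prop.1, hN.prop.2, ?_⟩
  calc #A ≤ #(N.biUnion fun i ↦ {j ∈ A | (j, i) ∈ R}) := card_le_card hcover
    _ ≤ #N * k := card_biUnion_le_card_mul _ _ _ fun i hi ↦ hA i (hN.prop.1 hi)
    _ = k * #N := Nat.mul_comm _ _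

namespace IsKissingNumber

variable {c K : ℕ}

lemma pos (hK : IsKissingNumber c K) (hc : 0 < c) : 0 < K :=
  hK.2 ⟨fun _ ↦ EuclideanSpace.single ⟨0, hc⟩ 1, fun _ ↦ by simp,
    fun i j hij ↦ absurd (Subsingleton.elim i j) hij⟩

lemma card_le_of_pairwise_lt_dist (hK : IsKissingNumber c K) (hc : 0 < c) {ι : Type*}
    {I : Finset ι} {v : ι → Pt c} {p : Pt c} {R : ℝ} (hball : ∀ i ∈ I, dist (v i) p ≤ R)
    (hsep : (I : Set ι).Pairwise fun i j ↦ R < dist (v i) (v j)) : #I ≤ K := by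
  rcases le_or_gt #I 1 with h | h
  · exact h.trans (hK.pos hc)
  have hne (i) (hi : i ∈ I) : v i - p ≠ 0 := by
    obtain ⟨j, hj, hji⟩ := exists_mem_ne h i
    intro hip
    have hji' : R < dist (v j) p := sub_eq_zero.1 hip ▸ hsep hj hi hji
    exact hji'.not_ge (hball j hj)
  refine hK.2 ⟨fun m ↦ NormedSpace.normalize (v (I.equivFin.symm m) - p),
    fun m ↦ NormedSpace.norm_normalize_eq_one_iff.2 (hne _ (coe_mem _)), fun m n hmn ↦ ?_⟩
  have hfar := (hsep (coe_mem (I.equivFin.symm m)) (coe_mem (I.equivFin.symm n))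
    (by simpa [Subtype.coe_inj] using hmn)).le
  rw [dist_eq_norm, ← sub_sub_sub_cancel_right _ _ p] at hfar
  simp only [dist_eq_norm] at hball
  exact one_le_norm_normalize_sub_normalize_s14 (hne _ (coe_mem _)) (hne _ (coe_mem _))
    ((hball _ (coe_mem _)).trans hfar) ((hball _ (coe_mem _)).trans hfar)

lemma card_le_mul_of_forall_card_le (hK : IsKissingNumber c K) (hc : 0 < c) {ι : Type*}
    {A : Finset ι} {v : ι → Pt c} {p : Pt c} {R : ℝ} {k : ℕ}
    (hball : ∀ i ∈ A, dist (v i) p ≤ R)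
    (hdeg : ∀ i ∈ A, #{j ∈ A | dist (v j) (v i) ≤ R} ≤ k) : #A ≤ k * K := by
  rcases A.eq_empty_or_nonempty with rfl | ⟨a, ha⟩
  · exact Nat.zero_le _
  have hR : 0 ≤ R := dist_nonneg.trans (hball a ha)
  let near : SetRel ι ι := {q | dist (v q.1) (v q.2) ≤ R}
  have : near.IsRefl := ⟨fun i ↦ by simpa [near] using hR⟩
  have : near.IsSymm := ⟨fun i j h ↦ by simpa [near, dist_comm] using h⟩
  obtain ⟨I, hIA, hsep, hcard⟩ := exists_isSeparated_card_le_mul near A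
    fun i hi ↦ by simpa [near] using hdeg i hi
  refine hcard.trans (Nat.mul_le_mul_left k (hK.card_le_of_pairwise_lt_dist hc
    (fun i hi ↦ hball i (hIA hi)) fun i hi j hj hij ↦ ?_))
  simpa [near] using hsep hi hj hij

end IsKissingNumber

/-- The coordinates in `S`, listed in increasing order and scaled by `|S|^(-1/2)`, so that `sdist S`
becomes the Euclidean distance of `ℝ^|S|`. -/
def scaledRestrict {d : ℕ} (S : Finset (Fin d)) (x : Pt d) : Pt #S :=
  WithLp.toLp 2 fun i ↦ x (S.orderEmbOfFin rfl i) / √(#S : ℝ)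

section Subspace

variable {d N k K : ℕ} {S : Finset (Fin d)} {r : ℝ} {X X' : Fin N → Pt d} {t : Fin N}

lemma sdist_eq_dist_scaledRestrict (S : Finset (Fin d)) (x y : Pt d) :
    sdist S x y = dist (scaledRestrict S x) (scaledRestrict S y) := by
  have hsum : ∑ i ∈ S, (x i - y i) ^ 2 =
      ∑ i, (x (S.orderEmbOfFin rfl i) - y (S.orderEmbOfFin rfl i)) ^ 2 := by
    conv_lhs => rw [← map_orderEmbOfFin_univ S rfl, sum_map]
    rfl
  rw [sdist, hsum, EuclideanSpace.dist_eq, sum_div]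
  simp [scaledRestrict, Real.dist_eq, ← sub_div, div_pow]

lemma card_sdist_le_le_sdeg_add_one (S : Finset (Fin d)) (X : Fin N → Pt d) (r : ℝ) (i : Fin N) :
    #{j | sdist S (X j) (X i) ≤ r} ≤ sdeg S X r i + 1 := by
  have hsdeg : sdeg S X r i = #(({j | sdist S (X j) (X i) ≤ r} : Finset (Fin N)).erase i) := by
    rw [sdeg, ← filter_ne', filter_filter]
    simp only [and_comm]
  rw [hsdeg]
  exact tsub_le_iff_right.1 pred_card_le_card_erase

lemma IsKissingNumber.card_sdeg_lt_and_sdist_le_mul (hK : IsKissingNumber #S K) (hS : S.Nonempty)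
    (X : Fin N → Pt d) (z : Pt d) :
    #{i | sdeg S X r i < k ∧ sdist S z (X i) ≤ r} ≤ k * K := by
  refine hK.card_le_mul_of_forall_card_le hS.card_pos (v := fun i ↦ scaledRestrict S (X i))
    (p := scaledRestrict S z) (R := r) (fun i hi ↦ ?_) fun i hi ↦ ?_
  · rw [dist_comm, ← sdist_eq_dist_scaledRestrict]
    exact (mem_filter.1 hi).2.2
  · simp only [← sdist_eq_dist_scaledRestrict]
    calc _ ≤ #{j | sdist S (X j) (X i) ≤ r} := card_le_card (filter_subset_filter _ (subset_univ _))
      _ ≤ sdeg S X r i + 1 := card_sdist_le_le_sdeg_add_one S X r i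
      _ ≤ k := (mem_filter.1 hi).2.1

lemma sdeg_le_sdeg_of_lt_sdist (hX : Set.EqOn X X' {t}ᶜ) {i : Fin N} (hit : i ≠ t)
    (hfar : r < sdist S (X' t) (X' i)) : sdeg S X' r i ≤ sdeg S X r i := by
  refine card_le_card fun j hj ↦ ?_
  simp only [mem_filter_univ] at hj ⊢
  have hjt : j ≠ t := by
    rintro rfl
    exact hj.2.not_gt hfar
  rwa [hX hit, hX hjt]

lemma qCountS_le_qCountS_add (hK : IsKissingNumber #S K) (hS : S.Nonempty)
    (hX : Set.EqOn X X' {t}ᶜ) : qCountS X k r S ≤ qCountS X' k r S + (k * K + 1) := by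
  let A : Finset (Fin N) := {i | sdeg S X r i < k ∧ sdist S (X' t) (X i) ≤ r}
  have hsub : ({i | sdeg S X r i < k} : Finset (Fin N)) ⊆
      ({i | sdeg S X' r i < k} : Finset (Fin N)) ∪ insert t A := by
    intro i hi
    simp only [A, mem_union, mem_insert, mem_filter_univ] at hi ⊢
    by_contra! hnew
    obtain ⟨hk, hit, hfar⟩ := hnew
    have := sdeg_le_sdeg_of_lt_sdist hX hit (hX hit ▸ hfar hi)
    omega
  calc qCountS X k r S
      ≤ #(({i | sdeg S X' r i < k} : Finset (Fin N)) ∪ insert t A) := card_le_card hsub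
    _ ≤ qCountS X' k r S + (#A + 1) :=
        (card_union_le _ _).trans (Nat.add_le_add_left (card_insert_le t A) _)
    _ ≤ qCountS X' k r S + (k * K + 1) := by
        gcongr
        exact hK.card_sdeg_lt_and_sdist_le_mul hS X (X' t)

lemma qCountS_le (X : Fin N → Pt d) (k : ℕ) (r : ℝ) (S : Finset (Fin d)) : qCountS X k r S ≤ N :=
  (card_le_univ _).trans_eq (Fintype.card_fin N)

lemma uSubspace_le_add_one (hK : IsKissingNumber #S K) (hS : S.Nonempty)
    (hX : Set.EqOn X X' {t}ᶜ) : uSubspace k r K X S ≤ uSubspace k r K X' S + 1 := by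
  have hpos : 0 < min N (k * K + 1) := lt_min t.pos (Nat.succ_pos _)
  have hq : qCountS X k r S ≤ qCountS X' k r S + min N (k * K + 1) := by
    have := qCountS_le_qCountS_add (k := k) (r := r) hK hS hX
    have := qCountS_le X k r S
    omega
  rw [uSubspace, uSubspace, div_add_one (by positivity)]
  gcongr
  exact_mod_cast hq

lemma abs_uSubspace_sub_uSubspace_le_one (hK : IsKissingNumber #S K) (hS : S.Nonempty)
    (hX : Set.EqOn X X' {t}ᶜ) : |uSubspace k r K X S - uSubspace k r K X' S| ≤ 1 :=
  abs_sub_le_iff.2 ⟨sub_le_iff_le_add'.2 (uSubspace_le_add_one hK hS hX),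
    sub_le_iff_le_add'.2 (uSubspace_le_add_one hK hS hX.symm)⟩

lemma exists_eqOn_compl_singleton_of_hamming_eq_one (h : hamming X X' = 1) :
    ∃ t, Set.EqOn X X' {t}ᶜ := by
  obtain ⟨t, ht⟩ := card_eq_one.1 h
  refine ⟨t, fun i hi ↦ ?_⟩
  have hit : i ∉ ({i | X i ≠ X' i} : Finset (Fin N)) := by simpa [ht] using hi
  simpa using hit

end Subspace

/-- The exponential mechanism with the utility function `u_subspace` guarantees
`2ε`-differential privacy: for neighboring databases `X ∼ X'` and any `c`-element
subspace `S`, `p_X(S) ≤ e^{2ε}·p_{X'}(S)`, where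
`p_X(S) = exp(ε·u(X,S)) / ∑_{S' ∈ F_c} exp(ε·u(X,S'))` on the family `F_c` of
`c`-element subsets of `{1,…,d}`. -/
theorem exponential_mechanism_subspace_dp
    (d N k c : ℕ) (hd : 1 ≤ d) (hk : 1 ≤ k) (hc : 1 ≤ c) (hcd : c ≤ d)
    (r : ℝ) (hr : 0 < r) (ε : ℝ) (hε : 0 < ε)
    (K : ℕ) (hK : IsKissingNumber c K)
    (X X' : Fin N → Pt d) (hH : hamming X X' = 1)
    (S : Finset (Fin d)) (hS : S.card = c) :
    Real.exp (ε * uSubspace k r K X S) /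
        (∑ S' ∈ (univ.filter fun S' : Finset (Fin d) => S'.card = c),
          Real.exp (ε * uSubspace k r K X S')) ≤
      Real.exp (2 * ε) *
        (Real.exp (ε * uSubspace k r K X' S) /
          (∑ S' ∈ (univ.filter fun S' : Finset (Fin d) => S'.card = c),
            Real.exp (ε * uSubspace k r K X' S'))) := by
  obtain ⟨t, hX⟩ := exists_eqOn_compl_singleton_of_hamming_eq_one hH
  have hsens (S' : Finset (Fin d)) (hS' : S' ∈ univ.filter fun S' : Finset (Fin d) ↦ S'.card = c) :
      |uSubspace k r K X S' - uSubspace k r K X' S'| ≤ 1 := by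
    obtain rfl : #S' = c := (mem_filter.1 hS').2
    exact abs_uSubspace_sub_uSubspace_le_one hK (card_pos.1 hc) hX
  simpa only [expMechanism, mul_one] using
    expMechanism_le_exp_mul hε.le hsens (mem_filter.2 ⟨mem_univ S, hS⟩)
end
end
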